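/- arXiv:math/0502122 — 6 statements merged into one kernel-verified Lean document; each statement's English description precedes it below -/
import Mathlib

section
/- Let n ≥ 3 and k ≥ 2 be integers and let a_1, …, a_k be positive real numbers. Then ∑_{i=1}^k a_i^{(n+2)/(n-2)} < (∑_{i=1}^k a_i) · (∑_{i=1}^k a_i^{2n/(n-2)})^{2/n}. -/
/-! Write `S = ∑ j, a j ^ (2n/(n-2))`. Since `(n+2)/(n-2) = 1 + (2n/(n-2)) * (2/n)`, each summand on
the left factors as `a i * (a i ^ (2n/(n-2))) ^ (2/n)`. As `k ≥ 2` and all terms are positive, a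
single term `a i ^ (2n/(n-2))` is strictly less than `S`, so the summand is strictly less than
`a i * S ^ (2/n)`; summing over `i` gives the claim, and Hölder's inequality is not needed. -/

open Finset

/-- Strict pointwise core of Aubin's Lemma: for integers `n ≥ 3`, `k ≥ 2` and positive reals
`a i`, `∑ i, a i ^ ((n+2)/(n-2)) < (∑ i, a i) * (∑ i, a i ^ (2n/(n-2)))^(2/n)`,
with real powers. -/
theorem sum_rpow_lt_sum_mul_sum_rpow (n k : ℕ) (hn : 3 ≤ n) (hk : 2 ≤ k)
    (a : Fin k → ℝ) (ha : ∀ i, 0 < a i) :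
    ∑ i, a i ^ (((n : ℝ) + 2) / ((n : ℝ) - 2)) <
      (∑ i, a i) * (∑ i, a i ^ (2 * (n : ℝ) / ((n : ℝ) - 2))) ^ ((2 : ℝ) / (n : ℝ)) := by
  have hn' : (3 : ℝ) ≤ n := by exact_mod_cast hn
  have hn0 : (n : ℝ) ≠ 0 := by linarith
  have hn2 : (n : ℝ) - 2 ≠ 0 := by linarith
  have hpos : ∀ i, 0 < a i ^ (2 * (n : ℝ) / ((n : ℝ) - 2)) :=
    fun i => Real.rpow_pos_of_pos (ha i) _
  have : Nontrivial (Fin k) := Fin.nontrivial_iff_two_le.mpr hk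
  rw [Finset.sum_mul]
  refine Finset.sum_lt_sum_of_nonempty Finset.univ_nonempty fun i _ => ?_
  have hexp : ((n : ℝ) + 2) / ((n : ℝ) - 2)
      = 1 + 2 * (n : ℝ) / ((n : ℝ) - 2) * ((2 : ℝ) / (n : ℝ)) := by
    field_simp
    ring
  rw [hexp, Real.rpow_add (ha i), Real.rpow_one, Real.rpow_mul (ha i).le]
  refine mul_lt_mul_of_pos_left (Real.rpow_lt_rpow (hpos i).le ?_ (by positivity)) (ha i)
  obtain ⟨j, hj⟩ := exists_ne i
  exact Finset.single_lt_sum hj (Finset.mem_univ i) (Finset.mem_univ j) (hpos j)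
    fun l _ _ => (hpos l).le
end

section
/- Let (X, μ) be a measure space with μ(X) > 0, let n ≥ 3 and k ≥ 2 be integers, and let u_1, …, u_k : X → ℝ be measurable functions with u_i(x) > 0 for every x ∈ X and every i. Set v := ∑_{i=1}^k u_i. If ∫_X v(x)^2 · (∑_{i=1}^k u_i(x)^{2n/(n-2)})^{2/n} dμ(x) is finite, then ∫_X v(x) · (∑_{i=1}^k u_i(x)^{(n+2)/(n-2)}) dμ(x) < ∫_X v(x)^2 · (∑_{i=1}^k u_i(x)^{2n/(n-2)})^{2/n} dμ(x). -/
/-!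
Write `p = 2n/(n-2)` and `S = ∑ aᵢ ^ p`. Since `(n+2)/(n-2) = 1 + p * (2/n)`, each term factors as
`aᵢ ^ ((n+2)/(n-2)) = aᵢ * (aᵢ ^ p) ^ (2/n)`, and `aᵢ ^ p < S` because at least one other positive
term contributes to `S`. Summing over `i` gives the strict pointwise inequality
`sum_rpow_lt_sum_mul`. The smaller integrand is therefore nonnegative and dominated by the larger
one, hence integrable, and the difference of the two is an everywhere positive function, whose
integral over a measure space of positive mass is positive.
-/

open Finset MeasureTheory

lemma sum_rpow_lt_sum_mul {n k : ℕ} (hn : 3 ≤ n) (hk : 2 ≤ k) (a : Fin k → ℝ)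
    (ha : ∀ i, 0 < a i) :
    ∑ i, a i ^ (((n : ℝ) + 2) / ((n : ℝ) - 2)) <
      (∑ i, a i) * (∑ i, a i ^ (2 * (n : ℝ) / ((n : ℝ) - 2))) ^ ((2 : ℝ) / (n : ℝ)) := by
  have hn' : (3 : ℝ) ≤ n := by exact_mod_cast hn
  have h0 : (n : ℝ) ≠ 0 := by positivity
  have h2 : (n : ℝ) - 2 ≠ 0 := by linarith
  have : Nontrivial (Fin k) := Fin.nontrivial_iff_two_le.mpr hk
  rw [Finset.sum_mul]
  refine Finset.sum_lt_sum_of_nonempty Finset.univ_nonempty fun i _ => ?_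
  have hexp : ((n : ℝ) + 2) / ((n : ℝ) - 2) =
      1 + 2 * (n : ℝ) / ((n : ℝ) - 2) * ((2 : ℝ) / (n : ℝ)) := by
    field_simp
    ring
  rw [hexp, Real.rpow_add (ha i), Real.rpow_one, Real.rpow_mul (ha i).le]
  refine mul_lt_mul_of_pos_left ?_ (ha i)
  refine Real.rpow_lt_rpow (Real.rpow_nonneg (ha i).le _) ?_ (by positivity)
  obtain ⟨j, hj⟩ := exists_ne i
  exact Finset.single_lt_sum hj (Finset.mem_univ i) (Finset.mem_univ j)
    (Real.rpow_pos_of_pos (ha j) _) fun l _ _ => Real.rpow_nonneg (ha l).le _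



/-- Strict intermediate integral inequality in the proof of Aubin's Lemma: on a measure
space of positive total measure, for everywhere positive measurable functions
`u 1, …, u k` (`k ≥ 2`, `n ≥ 3`) with `v := ∑ i, u i`, if the right-hand integrand is
integrable then
`∫ v ⬝ (∑ i, (u i)^((n+2)/(n-2))) dμ < ∫ v^2 ⬝ (∑ i, (u i)^(2n/(n-2)))^(2/n) dμ`. -/
theorem integral_strict_aubin {X : Type*} [MeasurableSpace X] (μ : Measure X)
    (hμ : 0 < μ Set.univ) (n k : ℕ) (hn : 3 ≤ n) (hk : 2 ≤ k)
    (u : Fin k → X → ℝ) (hmeas : ∀ i, Measurable (u i)) (hpos : ∀ i x, 0 < u i x)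
    (hint : Integrable
      (fun x => (∑ i, u i x) ^ 2 *
        (∑ i, u i x ^ (2 * (n : ℝ) / ((n : ℝ) - 2))) ^ ((2 : ℝ) / (n : ℝ))) μ) :
    ∫ x, (∑ i, u i x) * (∑ i, u i x ^ (((n : ℝ) + 2) / ((n : ℝ) - 2))) ∂μ <
      ∫ x, (∑ i, u i x) ^ 2 *
        (∑ i, u i x ^ (2 * (n : ℝ) / ((n : ℝ) - 2))) ^ ((2 : ℝ) / (n : ℝ)) ∂μ := by
  have : Nonempty (Fin k) := ⟨⟨0, by omega⟩⟩
  have hv : ∀ x, 0 < ∑ i, u i x := fun x =>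
    Finset.sum_pos (fun i _ => hpos i x) Finset.univ_nonempty
  have hlt : ∀ x, (∑ i, u i x) * (∑ i, u i x ^ (((n : ℝ) + 2) / ((n : ℝ) - 2))) <
      (∑ i, u i x) ^ 2 *
        (∑ i, u i x ^ (2 * (n : ℝ) / ((n : ℝ) - 2))) ^ ((2 : ℝ) / (n : ℝ)) := fun x => by
    rw [sq, mul_assoc]
    exact mul_lt_mul_of_pos_left
      (sum_rpow_lt_sum_mul hn hk (fun i => u i x) fun i => hpos i x) (hv x)
  have hint' : Integrable
      (fun x => (∑ i, u i x) * (∑ i, u i x ^ (((n : ℝ) + 2) / ((n : ℝ) - 2)))) μ := by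
    refine hint.mono' (Measurable.aestronglyMeasurable (by fun_prop)) (.of_forall fun x => ?_)
    rw [Real.norm_of_nonneg (mul_nonneg (hv x).le
      (Finset.sum_nonneg fun i _ => Real.rpow_nonneg (hpos i x).le _))]
    exact (hlt x).le
  rw [← sub_pos, ← integral_sub hint hint',
    integral_pos_iff_support_of_nonneg (fun x => (sub_pos.mpr (hlt x)).le) (hint.sub hint')]
  convert hμ
  exact Set.eq_univ_of_forall fun x => (sub_pos.mpr (hlt x)).ne'
end

section
/- Let (X, μ) be a measure space, let n ≥ 3 and k ≥ 2 be integers, and let u_1, …, u_k : X → ℝ be measurable functions with u_i(x) > 0 for every x ∈ X and ∫_X u_i^{2n/(n-2)} dμ = 1 for every i. Set v := ∑_{i=1}^k u_i. Then ∫_X v(x) · (∑_{i=1}^k u_i(x)^{(n+2)/(n-2)}) dμ(x) < k^{2/n} · (∫_X v^{2n/(n-2)} dμ)^{(n-2)/n}. -/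
open Finset MeasureTheory

/-!
Write `p = 2n/(n-2)`, `v = ∑ i, u i` and `S = ∑ i, (u i)^p`, so that `(n+2)/(n-2) - 1 = p * (2/n)`.
Since `k ≥ 2` and all `u i` are positive, `(u i)^p < S` at every point, hence
`(u i)^((n+2)/(n-2)) = u i * ((u i)^p)^(2/n) < u i * S^(2/n)`; summing over `i` and multiplying by
`v` gives the strict pointwise bound `v * ∑ i, (u i)^((n+2)/(n-2)) < S^(2/n) * v^2`
(`sum_mul_sum_rpow_lt`). Hölder's inequality with the conjugate exponents `n/2` and `n/(n-2)`
bounds the integral of the right-hand side by `(∫ S)^(2/n) * (∫ v^p)^((n-2)/n)`, and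
`∫ S = k` by the normalization. Strictness survives integration because `μ ≠ 0`.
-/

lemma sum_mul_sum_rpow_lt {n k : ℕ} (hn : 3 ≤ n) (hk : 2 ≤ k) (a : Fin k → ℝ)
    (ha : ∀ i, 0 < a i) :
    (∑ i, a i) * (∑ i, a i ^ (((n : ℝ) + 2) / ((n : ℝ) - 2))) <
      (∑ i, a i ^ (2 * (n : ℝ) / ((n : ℝ) - 2))) ^ ((2 : ℝ) / n) * (∑ i, a i) ^ 2 := by
  have hn' : (3 : ℝ) ≤ n := by exact_mod_cast hn
  have h2 : (n : ℝ) - 2 ≠ 0 := by linarith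
  have : Nontrivial (Fin k) := Fin.nontrivial_iff_two_le.2 hk
  have hne : (univ : Finset (Fin k)).Nonempty := ⟨⟨0, by omega⟩, mem_univ _⟩
  have hv : 0 < ∑ i, a i := sum_pos (fun i _ => ha i) hne
  set S := ∑ i, a i ^ (2 * (n : ℝ) / ((n : ℝ) - 2)) with hS
  have hterm : ∀ i, a i ^ (((n : ℝ) + 2) / ((n : ℝ) - 2)) < a i * S ^ ((2 : ℝ) / n) := by
    intro i
    have hlt : a i ^ (2 * (n : ℝ) / ((n : ℝ) - 2)) < S := by
      obtain ⟨j, hj⟩ := exists_ne i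
      exact single_lt_sum hj (mem_univ i) (mem_univ j) (Real.rpow_pos_of_pos (ha j) _)
        fun l _ _ => (Real.rpow_pos_of_pos (ha l) _).le
    have he : ((n : ℝ) + 2) / ((n : ℝ) - 2) = 1 + 2 * (n : ℝ) / ((n : ℝ) - 2) * (2 / n) := by
      field_simp
      ring
    rw [he, Real.rpow_add (ha i), Real.rpow_one, Real.rpow_mul (ha i).le]
    exact mul_lt_mul_of_pos_left
      (Real.rpow_lt_rpow (Real.rpow_pos_of_pos (ha i) _).le hlt (by positivity)) (ha i)
  have hsum := sum_lt_sum_of_nonempty hne fun i _ => hterm i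
  rw [← sum_mul] at hsum
  calc _ < (∑ i, a i) * ((∑ i, a i) * S ^ ((2 : ℝ) / n)) := mul_lt_mul_of_pos_left hsum hv
    _ = _ := by ring

/-- Key analytic inequality in the proof of Aubin's Lemma: for `n ≥ 3`, `k ≥ 2`, and
everywhere positive measurable functions `u i` normalized by
`∫ (u i)^(2n/(n-2)) dμ = 1`, with `v := ∑ i, u i`,
`∫ v ⬝ (∑ i, (u i)^((n+2)/(n-2))) dμ < k^(2/n) ⬝ (∫ v^(2n/(n-2)) dμ)^((n-2)/n)`. -/
theorem integral_aubin_key {X : Type*} [MeasurableSpace X] (μ : Measure X)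
    (n k : ℕ) (hn : 3 ≤ n) (hk : 2 ≤ k)
    (u : Fin k → X → ℝ) (hmeas : ∀ i, Measurable (u i)) (hpos : ∀ i x, 0 < u i x)
    (hnorm : ∀ i, ∫ x, u i x ^ (2 * (n : ℝ) / ((n : ℝ) - 2)) ∂μ = 1) :
    ∫ x, (∑ i, u i x) * (∑ i, u i x ^ (((n : ℝ) + 2) / ((n : ℝ) - 2))) ∂μ <
      (k : ℝ) ^ ((2 : ℝ) / (n : ℝ)) *
        (∫ x, (∑ i, u i x) ^ (2 * (n : ℝ) / ((n : ℝ) - 2)) ∂μ) ^ (((n : ℝ) - 2) / (n : ℝ)) := by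
  have hn' : (3 : ℝ) ≤ n := by exact_mod_cast hn
  have h2 : 0 < (n : ℝ) - 2 := by linarith
  have h0 : 0 < (n : ℝ) := by linarith
  have hp1 : 1 ≤ 2 * (n : ℝ) / ((n : ℝ) - 2) := by
    rw [le_div_iff₀ h2]; linarith
  have hpw := fun x => sum_mul_sum_rpow_lt hn hk (fun i => u i x) (fun i => hpos i x)
  set p := 2 * (n : ℝ) / ((n : ℝ) - 2) with hp
  -- The Bochner integral of a non-integrable function is `0`, so the normalization forces
  -- integrability.
  have hint : ∀ i, Integrable (fun x => u i x ^ p) μ := fun i =>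
    Integrable.of_integral_ne_zero (by rw [hnorm i]; exact one_ne_zero)
  have hμ : μ ≠ 0 := by
    rintro rfl
    simpa using hnorm ⟨0, by omega⟩
  have hS0 : ∀ x, 0 ≤ ∑ i, u i x ^ p := fun x =>
    sum_nonneg fun i _ => Real.rpow_nonneg (hpos i x).le _
  have hv0 : ∀ x, 0 ≤ ∑ i, u i x := fun x => sum_nonneg fun i _ => (hpos i x).le
  have hSint : Integrable (fun x => ∑ i, u i x ^ p) μ := integrable_finsetSum _ fun i _ => hint i
  have hSval : ∫ x, ∑ i, u i x ^ p ∂μ = k := by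
    rw [integral_finsetSum _ fun i _ => hint i]
    simp [hnorm]
  have hvmeas : Measurable fun x => ∑ i, u i x := Finset.measurable_fun_sum _ fun i _ => hmeas i
  have hSmeas : Measurable fun x => ∑ i, u i x ^ p :=
    Finset.measurable_fun_sum _ fun i _ => (hmeas i).pow_const p
  have hvint : Integrable (fun x => (∑ i, u i x) ^ p) μ := by
    refine (hSint.const_mul ((k : ℝ) ^ (p - 1))).mono'
      (hvmeas.pow_const p).aestronglyMeasurable (ae_of_all _ fun x => ?_)
    rw [Real.norm_of_nonneg (Real.rpow_nonneg (hv0 x) _)]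
    simpa using Real.rpow_sum_le_const_mul_sum_rpow_of_nonneg (univ : Finset (Fin k)) hp1
      (f := fun i => u i x) (fun i _ => (hpos i x).le)
  have hconj : ((n : ℝ) / 2).HolderConjugate ((n : ℝ) / (n - 2)) := by
    rw [Real.holderConjugate_iff]
    refine ⟨by linarith, ?_⟩
    field_simp
    ring
  have hFpow : ∀ x, ((∑ i, u i x ^ p) ^ ((2 : ℝ) / n)) ^ ((n : ℝ) / 2) = ∑ i, u i x ^ p := by
    intro x
    rw [← Real.rpow_mul (hS0 x), div_mul_div_cancel₀ h0.ne', div_self two_ne_zero, Real.rpow_one]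
  have hGpow : ∀ x, ((∑ i, u i x) ^ 2) ^ ((n : ℝ) / (n - 2)) = (∑ i, u i x) ^ p := by
    intro x
    rw [← Real.rpow_natCast, ← Real.rpow_mul (hv0 x), hp]
    congr 1
    push_cast
    ring
  have hF : MemLp (fun x => (∑ i, u i x ^ p) ^ ((2 : ℝ) / n)) (ENNReal.ofReal ((n : ℝ) / 2)) μ := by
    rw [← integrable_norm_rpow_iff (hSmeas.pow_const _).aestronglyMeasurable (by simpa using h0) (by simp),
      ENNReal.toReal_ofReal (by positivity)]
    refine hSint.congr (ae_of_all _ fun x => ?_)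
    simp only [Real.norm_of_nonneg (Real.rpow_nonneg (hS0 x) _), hFpow]
  have hG : MemLp (fun x => (∑ i, u i x) ^ 2) (ENNReal.ofReal ((n : ℝ) / (n - 2))) μ := by
    rw [← integrable_norm_rpow_iff (by fun_prop) (by simpa using div_pos h0 h2) (by simp),
      ENNReal.toReal_ofReal (by positivity)]
    refine hvint.congr (ae_of_all _ fun x => ?_)
    simp only [Real.norm_of_nonneg (sq_nonneg (∑ i, u i x)), hGpow]
  have : ENNReal.HolderConjugate (ENNReal.ofReal ((n : ℝ) / 2))
      (ENNReal.ofReal ((n : ℝ) / (n - 2))) := hconj.ennrealOfReal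
  have hFG : Integrable (fun x => (∑ i, u i x ^ p) ^ ((2 : ℝ) / n) * (∑ i, u i x) ^ 2) μ :=
    hF.integrable_mul hG
  have hf : Integrable
      (fun x => (∑ i, u i x) * (∑ i, u i x ^ (((n : ℝ) + 2) / ((n : ℝ) - 2)))) μ := by
    refine hFG.mono' (by fun_prop) (ae_of_all _ fun x => ?_)
    rw [Real.norm_of_nonneg (mul_nonneg (hv0 x)
      (sum_nonneg fun i _ => Real.rpow_nonneg (hpos i x).le _))]
    exact (hpw x).le
  have hlt := (integral_pos_iff_support_of_nonneg (fun x => sub_nonneg.2 (hpw x).le)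
    (hFG.sub hf)).2 (by
      rw [Function.support_eq_univ fun x => (sub_pos.2 (hpw x)).ne']
      exact Measure.measure_univ_pos.2 hμ)
  rw [integral_sub hFG hf, sub_pos] at hlt
  refine hlt.trans_le ?_
  have := integral_mul_le_Lp_mul_Lq_of_nonneg hconj
    (ae_of_all μ fun x => Real.rpow_nonneg (hS0 x) ((2 : ℝ) / n))
    (ae_of_all μ fun x => sq_nonneg (∑ i, u i x)) hF hG
  simpa only [hFpow, hGpow, hSval, one_div_div] using this
end

section
/- Define f : ℝ → ℝ by f(t) = (2e^t − e^{t/2})^{−1/2}. Then f is differentiable on (0, ∞), the integrals A := ∫_0^∞ (f′(t))^2 · (e^t − e^{t/2})^{1/2} dt and B := ∫_0^∞ f(t)^6 · e^{2t} · (e^t − e^{t/2})^{−1/2} dt are both finite with B > 0, and (16π)^{2/3} · A / B^{1/3} = (6 · (2π^2)^{2/3} · 2^{−2/3}) / 8. -/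
/-!
Put `u(t) = √(1 - e^{-t/2})`, which increases from `0` to `1` on `(0, ∞)` and satisfies
`u' = (1 - u²) / (4u)` and `e^{t/2} = 1 / (1 - u²)`. This substitution makes both integrands
rational:

* `A = ∫₀¹ u²(3 + u²)² / (4(1 + u²)³) du`,
* `B = ∫₀¹ 4(1 - u²)² / (1 + u²)³ du`.

Both have elementary antiderivatives (`hasDerivAt_primitiveA`, `hasDerivAt_primitiveB`), which give
`A = 3π/32` and `B = π/2`. Finiteness comes with the fundamental theorem of calculus on
`(0, ∞)`, since the integrands are nonnegative (`integral_of_substitution`). Both sides of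
the normalization identity then equal `(3/4) π^{4/3}`.
-/

open MeasureTheory Real Set

/-- The optimal Schwarzschild profile `f(t) = (2 e^t − e^{t/2})^{−1/2}`. -/
noncomputable def schwarzschildProfile : ℝ → ℝ :=
  fun t => (2 * Real.exp t - Real.exp (t / 2)) ^ (-(1 : ℝ) / 2)

/-- The substitution variable `u(t) = √(1 - e^{-t/2})`. -/
noncomputable def substVar (t : ℝ) : ℝ := √(1 - Real.exp (-(t / 2)))

lemma continuous_substVar : Continuous substVar := by
  unfold substVar; fun_prop

lemma substVar_sq {t : ℝ} (ht : 0 < t) : substVar t ^ 2 = 1 - Real.exp (-(t / 2)) := by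
  have : Real.exp (-(t / 2)) ≤ 1 := Real.exp_le_one_iff.2 (by linarith)
  exact Real.sq_sqrt (by linarith)

lemma substVar_pos {t : ℝ} (ht : 0 < t) : 0 < substVar t := by
  have : Real.exp (-(t / 2)) < 1 := by simpa using ht
  exact Real.sqrt_pos.2 (by linarith)

lemma one_sub_substVar_sq_pos {t : ℝ} (ht : 0 < t) : 0 < 1 - substVar t ^ 2 := by
  rw [substVar_sq ht]
  linarith [Real.exp_pos (-(t / 2))]

lemma exp_half_eq {t : ℝ} (ht : 0 < t) : Real.exp (t / 2) = 1 / (1 - substVar t ^ 2) := by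
  rw [substVar_sq ht, sub_sub_cancel, Real.exp_neg, one_div, inv_inv]

lemma exp_eq_sq_exp_half (t : ℝ) : Real.exp t = Real.exp (t / 2) ^ 2 := by
  rw [← Real.exp_nat_mul]; congr 1; push_cast; ring

lemma exp_eq {t : ℝ} (ht : 0 < t) : Real.exp t = (1 / (1 - substVar t ^ 2)) ^ 2 := by
  rw [exp_eq_sq_exp_half, exp_half_eq ht]

lemma hasDerivAt_substVar {t : ℝ} (ht : 0 < t) :
    HasDerivAt substVar ((1 - substVar t ^ 2) / (4 * substVar t)) t := by
  have hlt : Real.exp (-(t / 2)) < 1 := by simpa using ht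
  have h1 : HasDerivAt (fun s : ℝ => 1 - Real.exp (-(s / 2)))
      (-(Real.exp (-(t / 2)) * (-(1 / 2)))) t :=
    (((hasDerivAt_id t).div_const 2).neg.exp).const_sub 1
  refine (h1.sqrt (by linarith)).congr_deriv ?_
  have hu := substVar_pos ht
  rw [substVar_sq ht]
  unfold substVar at hu ⊢
  field_simp
  ring

lemma tendsto_substVar : Filter.Tendsto substVar Filter.atTop (nhds 1) := by
  have h : Filter.Tendsto (fun t : ℝ => Real.exp (-(t / 2))) Filter.atTop (nhds 0) :=
    Real.tendsto_exp_neg_atTop_nhds_zero.comp (Filter.tendsto_id.atTop_div_const (by norm_num))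
  have h2 := (h.const_sub 1).sqrt
  rwa [sub_zero, Real.sqrt_one] at h2

/-- Change of variables `u = substVar t` for a nonnegative integrand with a known antiderivative
`G` in the variable `u`. -/
lemma integral_of_substitution {F G g : ℝ → ℝ} (hG : ∀ u, HasDerivAt G (g u) u)
    (hg : ∀ u, 0 ≤ g u)
    (hF : ∀ t, 0 < t → F t = g (substVar t) * ((1 - substVar t ^ 2) / (4 * substVar t))) :
    IntegrableOn F (Ioi 0) ∧ ∫ t in Ioi (0 : ℝ), F t = G 1 - G 0 := by
  have hGc : Continuous G := continuous_iff_continuousAt.2 fun u => (hG u).continuousAt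
  have hd : ∀ t ∈ Ioi (0 : ℝ), HasDerivAt (G ∘ substVar) (F t) t := by
    intro t ht
    rw [hF t ht]
    exact (hG _).comp t (hasDerivAt_substVar ht)
  have hpos : ∀ t ∈ Ioi (0 : ℝ), 0 ≤ F t := by
    intro t ht
    rw [hF t ht]
    have := substVar_pos ht
    have := one_sub_substVar_sq_pos ht
    have := hg (substVar t)
    positivity
  have hc : ContinuousWithinAt (G ∘ substVar) (Ici 0) 0 :=
    (hGc.comp continuous_substVar).continuousWithinAt
  have hl : Filter.Tendsto (G ∘ substVar) Filter.atTop (nhds (G 1)) :=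
    (hGc.tendsto 1).comp tendsto_substVar
  refine ⟨integrableOn_Ioi_deriv_of_nonneg hc hd hpos hl, ?_⟩
  rw [integral_Ioi_of_hasDerivAt_of_nonneg hc hd hpos hl]
  simp [substVar]

lemma hasDerivAt_primitiveA (u : ℝ) :
    HasDerivAt (fun u : ℝ => (u + 3 / 2 * Real.arctan u - u / (1 + u ^ 2) ^ 2
        - 3 / 2 * (u / (1 + u ^ 2))) / 4)
      (u ^ 2 * (3 + u ^ 2) ^ 2 / (4 * (1 + u ^ 2) ^ 3)) u := by
  have hw : 1 + u ^ 2 ≠ 0 := by positivity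
  have h1 : HasDerivAt (fun u : ℝ => 1 + u ^ 2) (2 * u) u := by
    simpa using (hasDerivAt_pow 2 u).const_add 1
  have h := ((((hasDerivAt_id u).add ((Real.hasDerivAt_arctan u).const_mul (3 / 2))).sub
    ((hasDerivAt_id u).div (h1.pow 2) (pow_ne_zero 2 hw))).sub
    (((hasDerivAt_id u).div h1 hw).const_mul (3 / 2))).div_const 4
  refine h.congr_deriv ?_
  simp only [id, Pi.pow_apply]
  field_simp
  ring

lemma hasDerivAt_primitiveB (u : ℝ) :
    HasDerivAt (fun u : ℝ => 4 * (u / (1 + u ^ 2) ^ 2 - 1 / 2 * (u / (1 + u ^ 2))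
        + 1 / 2 * Real.arctan u))
      (4 * (1 - u ^ 2) ^ 2 / (1 + u ^ 2) ^ 3) u := by
  have hw : 1 + u ^ 2 ≠ 0 := by positivity
  have h1 : HasDerivAt (fun u : ℝ => 1 + u ^ 2) (2 * u) u := by
    simpa using (hasDerivAt_pow 2 u).const_add 1
  have h := ((((hasDerivAt_id u).div (h1.pow 2) (pow_ne_zero 2 hw)).sub
    (((hasDerivAt_id u).div h1 hw).const_mul (1 / 2))).add
    ((Real.hasDerivAt_arctan u).const_mul (1 / 2))).const_mul 4
  refine h.congr_deriv ?_
  simp only [id, Pi.pow_apply]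
  field_simp
  ring

lemma profile_base_pos {t : ℝ} (ht : 0 < t) : 0 < 2 * Real.exp t - Real.exp (t / 2) := by
  have h : Real.exp (t / 2) < Real.exp t := Real.exp_lt_exp.2 (by linarith)
  linarith [Real.exp_pos t]

lemma hasDerivAt_profile {t : ℝ} (ht : 0 < t) :
    HasDerivAt schwarzschildProfile
      (schwarzschildProfile t * (-(1 / 2) * (2 * Real.exp t - Real.exp (t / 2) / 2)
        / (2 * Real.exp t - Real.exp (t / 2)))) t := by
  have hb := profile_base_pos ht
  have h1 : HasDerivAt (fun s : ℝ => 2 * Real.exp s - Real.exp (s / 2))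
      (2 * Real.exp t - Real.exp (t / 2) * (1 / 2)) t :=
    ((Real.hasDerivAt_exp t).const_mul 2).sub (((hasDerivAt_id t).div_const 2).exp)
  have h2 := h1.rpow_const (p := -(1 : ℝ) / 2) (Or.inl hb.ne')
  refine h2.congr_deriv ?_
  rw [Real.rpow_sub_one hb.ne']
  unfold schwarzschildProfile
  ring

lemma profile_sq {t : ℝ} (ht : 0 < t) :
    schwarzschildProfile t ^ 2 = (2 * Real.exp t - Real.exp (t / 2))⁻¹ := by
  unfold schwarzschildProfile
  rw [← Real.rpow_mul_natCast (profile_base_pos ht).le, ← Real.rpow_neg_one]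
  norm_num

lemma profile_rpow_six {t : ℝ} (ht : 0 < t) :
    schwarzschildProfile t ^ (6 : ℝ) = ((2 * Real.exp t - Real.exp (t / 2))⁻¹) ^ 3 := by
  rw [← profile_sq ht, ← pow_mul]
  exact_mod_cast Real.rpow_natCast (schwarzschildProfile t) 6

lemma sqrt_area {t : ℝ} (ht : 0 < t) :
    (Real.exp t - Real.exp (t / 2)) ^ ((1 : ℝ) / 2) = substVar t / (1 - substVar t ^ 2) := by
  have hu := substVar_pos ht
  have hv := one_sub_substVar_sq_pos ht
  rw [← Real.sqrt_eq_rpow, exp_eq ht, exp_half_eq ht]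
  refine (Real.sqrt_eq_iff_mul_self_eq_of_pos (by positivity)).2 ?_
  field_simp
  ring

lemma inv_sqrt_area {t : ℝ} (ht : 0 < t) :
    (Real.exp t - Real.exp (t / 2)) ^ (-(1 : ℝ) / 2) = (1 - substVar t ^ 2) / substVar t := by
  have h : Real.exp (t / 2) < Real.exp t := Real.exp_lt_exp.2 (by linarith)
  rw [neg_div, Real.rpow_neg (by linarith), sqrt_area ht, inv_div]

lemma profile_base_eq {t : ℝ} (ht : 0 < t) :
    2 * Real.exp t - Real.exp (t / 2)
      = (1 + substVar t ^ 2) / (1 - substVar t ^ 2) ^ 2 := by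
  have hv := one_sub_substVar_sq_pos ht
  rw [exp_eq ht, exp_half_eq ht]
  field_simp
  ring

lemma integrandA_eq {t : ℝ} (ht : 0 < t) :
    (deriv schwarzschildProfile t) ^ 2 * (Real.exp t - Real.exp (t / 2)) ^ ((1 : ℝ) / 2)
      = substVar t ^ 2 * (3 + substVar t ^ 2) ^ 2 / (4 * (1 + substVar t ^ 2) ^ 3)
        * ((1 - substVar t ^ 2) / (4 * substVar t)) := by
  have hu := substVar_pos ht
  have hv := one_sub_substVar_sq_pos ht
  rw [(hasDerivAt_profile ht).deriv, mul_pow, profile_sq ht, sqrt_area ht, profile_base_eq ht,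
    exp_eq ht, exp_half_eq ht]
  have hw : 0 < 1 + substVar t ^ 2 := by positivity
  generalize substVar t = u at *
  field_simp
  ring

lemma integrandB_eq {t : ℝ} (ht : 0 < t) :
    schwarzschildProfile t ^ (6 : ℝ) * Real.exp (2 * t) *
        (Real.exp t - Real.exp (t / 2)) ^ (-(1 : ℝ) / 2)
      = 4 * (1 - substVar t ^ 2) ^ 2 / (1 + substVar t ^ 2) ^ 3
        * ((1 - substVar t ^ 2) / (4 * substVar t)) := by
  have hu := substVar_pos ht
  have hv := one_sub_substVar_sq_pos ht
  have h2 : Real.exp (2 * t) = Real.exp t ^ 2 := by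
    rw [exp_eq_sq_exp_half (2 * t)]; congr 2; ring
  rw [profile_rpow_six ht, inv_sqrt_area ht, profile_base_eq ht, h2, exp_eq ht]
  have hw : 0 < 1 + substVar t ^ 2 := by positivity
  generalize substVar t = u at *
  field_simp

/-- With `A = 3π/32` and `B = π/2`, both sides of the identity equal `(3/4) π^{4/3}`. -/
lemma normalization_arith :
    (16 * π) ^ ((2 : ℝ) / 3) * (3 * π / 32) / (π / 2) ^ ((1 : ℝ) / 3) =
      6 * (2 * π ^ 2) ^ ((2 : ℝ) / 3) * 2 ^ (-(2 : ℝ) / 3) / 8 := by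
  have hp := Real.pi_pos
  -- Every factor is expressed through the cube roots of `2` and `π`.
  obtain ⟨a, ha, ha3⟩ : ∃ a : ℝ, 0 < a ∧ a ^ 3 = 2 :=
    ⟨2 ^ ((1 : ℝ) / 3), by positivity, by
      rw [← Real.rpow_mul_natCast (by norm_num)]; norm_num⟩
  obtain ⟨b, hb, hb3⟩ : ∃ b : ℝ, 0 < b ∧ b ^ 3 = π :=
    ⟨π ^ ((1 : ℝ) / 3), by positivity, by
      rw [← Real.rpow_mul_natCast hp.le]; norm_num⟩
  have key : ∀ c : ℝ, 0 < c → (c ^ 3) ^ ((2 : ℝ) / 3) = c ^ 2 := by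
    intro c hc
    rw [← Real.rpow_natCast_mul hc.le]
    norm_num
  have key1 : ∀ c : ℝ, 0 < c → (c ^ 3) ^ ((1 : ℝ) / 3) = c := by
    intro c hc
    rw [← Real.rpow_natCast_mul hc.le]
    norm_num
  have e1 : (16 * π) ^ ((2 : ℝ) / 3) = (2 * a * b) ^ 2 := by
    rw [← key _ (by positivity)]; congr 1; rw [mul_pow, mul_pow, ha3, hb3]; norm_num
  have e2 : (π / 2) ^ ((1 : ℝ) / 3) = b / a := by
    rw [← key1 _ (by positivity : 0 < b / a), div_pow, ha3, hb3]
  have e3 : (2 * π ^ 2) ^ ((2 : ℝ) / 3) = (a * b ^ 2) ^ 2 := by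
    rw [← key _ (by positivity : 0 < a * b ^ 2), mul_pow, ha3, ← hb3]; congr 2; ring
  have e4 : (2 : ℝ) ^ (-(2 : ℝ) / 3) = (a ^ 2)⁻¹ := by
    rw [neg_div, Real.rpow_neg (by norm_num), ← key a ha, ha3]
  rw [e1, e2, e3, e4, ← hb3]
  field_simp
  rw [ha3]
  norm_num

/-- Normalization identity for the optimal Schwarzschild test-function profile:
`f` is differentiable on `(0,∞)`, the integrals
`A = ∫_0^∞ (f')² (e^t − e^{t/2})^{1/2} dt` and
`B = ∫_0^∞ f^6 e^{2t} (e^t − e^{t/2})^{−1/2} dt` are finite, `B > 0`, and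
`(16π)^{2/3} A / B^{1/3} = (6 (2π²)^{2/3} 2^{−2/3}) / 8` (i.e. `Y₂/8`). -/
theorem schwarzschild_profile_normalization :
    DifferentiableOn ℝ schwarzschildProfile (Ioi (0 : ℝ)) ∧
    IntegrableOn
      (fun t => (deriv schwarzschildProfile t) ^ 2 *
        (Real.exp t - Real.exp (t / 2)) ^ ((1 : ℝ) / 2)) (Ioi (0 : ℝ)) ∧
    IntegrableOn
      (fun t => schwarzschildProfile t ^ (6 : ℝ) * Real.exp (2 * t) *
        (Real.exp t - Real.exp (t / 2)) ^ (-(1 : ℝ) / 2)) (Ioi (0 : ℝ)) ∧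
    0 < (∫ t in Ioi (0 : ℝ), schwarzschildProfile t ^ (6 : ℝ) * Real.exp (2 * t) *
        (Real.exp t - Real.exp (t / 2)) ^ (-(1 : ℝ) / 2)) ∧
    (16 * π) ^ ((2 : ℝ) / 3) *
        (∫ t in Ioi (0 : ℝ), (deriv schwarzschildProfile t) ^ 2 *
          (Real.exp t - Real.exp (t / 2)) ^ ((1 : ℝ) / 2)) /
        (∫ t in Ioi (0 : ℝ), schwarzschildProfile t ^ (6 : ℝ) * Real.exp (2 * t) *
          (Real.exp t - Real.exp (t / 2)) ^ (-(1 : ℝ) / 2)) ^ ((1 : ℝ) / 3) =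
      6 * (2 * π ^ 2) ^ ((2 : ℝ) / 3) * 2 ^ (-(2 : ℝ) / 3) / 8 := by
  obtain ⟨iA, vA⟩ := integral_of_substitution hasDerivAt_primitiveA (fun u => by positivity)
    (fun t ht => integrandA_eq ht)
  obtain ⟨iB, vB⟩ := integral_of_substitution hasDerivAt_primitiveB (fun u => by positivity)
    (fun t ht => integrandB_eq ht)
  have vA' := vA.trans (show _ = 3 * π / 32 by norm_num [Real.arctan_one]; ring)
  have vB' := vB.trans (show _ = π / 2 by norm_num [Real.arctan_one]; ring)
  refine ⟨fun t ht => (hasDerivAt_profile ht).differentiableAt.differentiableWithinAt,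
    iA, iB, ?_, ?_⟩
  · rw [vB']; positivity
  · rw [vA', vB']; exact normalization_arith
end

section
/- Let a_0 > 0, b ≥ 0, t ≥ 0, and let x, h, I be real numbers with x > 0, h ≥ 0, I ≥ 0. Assume that a_0 · e^t ≤ x ≤ (a_0 + b) · e^t, that √(x/(16π)^3) · (16π − h) ≥ √(a_0/(16π)), and that I ≤ √(x · h). Then I ≤ √(16π · a_0 · (e^t − e^{t/2})) + √(16π · b · e^t). -/
/-!
Write `c = 16π`. Monotonicity of the Hawking mass is equivalent to `x h ≤ c x - c √(a₀ x)`.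
The upper area bound controls the first term by `c (a₀ + b) eᵗ`, and the lower one gives
`√(a₀ x) ≥ a₀ e^{t/2}`, so `x h ≤ c a₀ (eᵗ - e^{t/2}) + c b eᵗ`. Cauchy–Schwarz and
subadditivity of the square root conclude.
-/

open Real

theorem sqrt_add_le_add_sqrt {u v : ℝ} (hu : 0 ≤ u) (hv : 0 ≤ v) :
    √(u + v) ≤ √u + √v := by
  refine Real.sqrt_le_iff.2 ⟨by positivity, ?_⟩
  nlinarith [Real.sq_sqrt hu, Real.sq_sqrt hv, mul_nonneg (Real.sqrt_nonneg u) (Real.sqrt_nonneg v)]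

/-- Algebraic content of the bound on `∫_{Σ_t} H dA` along weak inverse mean curvature
flow, via Geroch monotonicity of the Hawking mass and Cauchy–Schwarz. -/
theorem imcf_mean_curvature_integral_bound
    (a₀ b t x h I : ℝ) (ha₀ : 0 < a₀) (hb : 0 ≤ b) (ht : 0 ≤ t)
    (hx : 0 < x) (hh : 0 ≤ h) (hI : 0 ≤ I)
    (hlow : a₀ * Real.exp t ≤ x) (hup : x ≤ (a₀ + b) * Real.exp t)
    (hmono : Real.sqrt (x / (16 * π) ^ 3) * (16 * π - h) ≥ Real.sqrt (a₀ / (16 * π)))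
    (hCS : I ≤ Real.sqrt (x * h)) :
    I ≤ Real.sqrt (16 * π * a₀ * (Real.exp t - Real.exp (t / 2))) +
      Real.sqrt (16 * π * b * Real.exp t) := by
  have hc : 0 < 16 * π := by positivity
  set c := 16 * π with hcdef
  have hE : Real.exp t = Real.exp (t / 2) ^ 2 := by
    rw [← Real.exp_nat_mul]; congr 1; push_cast; ring
  -- Scaling the monotonicity by `√(x c³)` clears all denominators at once.
  have hscale := mul_le_mul_of_nonneg_left hmono (Real.sqrt_nonneg (x * c ^ 3))
  have hleft : √(x * c ^ 3) * √(x / c ^ 3) = x := by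
    rw [← Real.sqrt_mul (by positivity),
      show x * c ^ 3 * (x / c ^ 3) = x ^ 2 by field_simp, Real.sqrt_sq hx.le]
  have hright : c * (a₀ * Real.exp (t / 2)) ≤ √(x * c ^ 3) * √(a₀ / c) := by
    rw [← Real.sqrt_mul (by positivity),
      show x * c ^ 3 * (a₀ / c) = c ^ 2 * a₀ * x by field_simp]
    apply Real.le_sqrt_of_sq_le
    calc (c * (a₀ * Real.exp (t / 2))) ^ 2 = c ^ 2 * a₀ * (a₀ * Real.exp t) := by
          rw [hE]; ring
      _ ≤ c ^ 2 * a₀ * x := by gcongr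
  rw [← mul_assoc, hleft] at hscale
  have hcx : c * x ≤ c * ((a₀ + b) * Real.exp t) := by gcongr
  have hu : 0 ≤ c * a₀ * (Real.exp t - Real.exp (t / 2)) :=
    mul_nonneg (by positivity) (sub_nonneg.2 (Real.exp_le_exp.2 (by linarith)))
  have hv : 0 ≤ c * b * Real.exp t := by positivity
  calc I ≤ √(x * h) := hCS
    _ ≤ √(c * a₀ * (Real.exp t - Real.exp (t / 2)) + c * b * Real.exp t) :=
        Real.sqrt_le_sqrt (by linarith)
    _ ≤ _ := sqrt_add_le_add_sqrt hu hv
end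

section
/- Define f : ℝ → ℝ by f(t) = (2e^t − e^{t/2})^{−1/2}, and for c ≥ 0 set F(c) := ∫_0^∞ f(t)^6 · e^{2t} · (√(16π(e^t − e^{t/2})) + √(16π · c · e^t))^{−1} dt. Then F(c) is finite for every c ≥ 0 and the function F is continuous on [0, ∞); in particular F(c) → F(0) as c → 0⁺. -/
/-!
The argument is dominated convergence. For `t > 0` one has `2 e^t − e^{t/2} ≥ e^t`, hence
`f(t)^6 e^{2t} ≤ e^{-t}`; and `e^t − e^{t/2} = e^{t/2} (e^{t/2} − 1) ≥ t/2`, hence the reciprocal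
factor is at most `t^{-1/2}` for every `c`. So the integrands are bounded, uniformly
in `c`, by `e^{-t} t^{-1/2}`, the integrand of `Γ(1/2)` (`Real.GammaIntegral_convergent`).
For fixed `t > 0` the denominator is positive, so the integrand is continuous in `c`.
-/

open MeasureTheory Real Set Filter

/-- The error integral `F(c) = ∫_0^∞ f(t)^6 e^{2t}
(√(16π(e^t − e^{t/2})) + √(16π c e^t))^{−1} dt`. -/
noncomputable def errorIntegral (c : ℝ) : ℝ :=
  ∫ t in Ioi (0 : ℝ), schwarzschildProfile t ^ (6 : ℝ) * Real.exp (2 * t) *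
    (Real.sqrt (16 * π * (Real.exp t - Real.exp (t / 2))) +
      Real.sqrt (16 * π * c * Real.exp t))⁻¹

/-- The integrand of `errorIntegral`, as a function of the parameter `c` and the variable `t`. -/
noncomputable def errorIntegrand (c t : ℝ) : ℝ :=
  schwarzschildProfile t ^ (6 : ℝ) * Real.exp (2 * t) *
    (Real.sqrt (16 * π * (Real.exp t - Real.exp (t / 2))) +
      Real.sqrt (16 * π * c * Real.exp t))⁻¹

lemma measurable_errorIntegrand (c : ℝ) : Measurable (errorIntegrand c) := by
  unfold errorIntegrand schwarzschildProfile
  fun_prop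

lemma profile_pow_mul_exp_le {t : ℝ} (ht : 0 < t) :
    schwarzschildProfile t ^ (6 : ℝ) * Real.exp (2 * t) ≤ Real.exp (-t) := by
  have h1 : Real.exp t ≤ 2 * Real.exp t - Real.exp (t / 2) := by
    have : Real.exp (t / 2) ≤ Real.exp t := Real.exp_le_exp.2 (by linarith)
    linarith
  have h2 : schwarzschildProfile t ^ (6 : ℝ) ≤ Real.exp (-3 * t) := by
    unfold schwarzschildProfile
    rw [← Real.rpow_mul ((Real.exp_pos t).le.trans h1)]
    calc _ ≤ Real.exp t ^ (-(1 : ℝ) / 2 * 6) :=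
          Real.rpow_le_rpow_of_nonpos (Real.exp_pos t) h1 (by norm_num)
      _ = Real.exp (-3 * t) := by
          rw [← Real.exp_mul]
          congr 1
          ring
  calc _ ≤ Real.exp (-3 * t) * Real.exp (2 * t) := by gcongr
    _ = Real.exp (-t) := by
        rw [← Real.exp_add]
        congr 1
        ring

lemma sqrt_le_sqrt_exp_sub {t : ℝ} (ht : 0 < t) :
    Real.sqrt t ≤ Real.sqrt (16 * π * (Real.exp t - Real.exp (t / 2))) := by
  apply Real.sqrt_le_sqrt
  have h1 : t / 2 + 1 ≤ Real.exp (t / 2) := Real.add_one_le_exp _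
  have h2 : Real.exp t = Real.exp (t / 2) * Real.exp (t / 2) := by
    rw [← Real.exp_add]
    congr 1
    ring
  have h3 : t / 2 ≤ Real.exp t - Real.exp (t / 2) := by
    rw [h2]
    nlinarith
  nlinarith [Real.pi_gt_three]

/-- The dominating function is the integrand of `Γ(1/2)`, and does not depend on `c`. -/
lemma norm_errorIntegrand_le (c : ℝ) {t : ℝ} (ht : 0 < t) :
    ‖errorIntegrand c t‖ ≤ Real.exp (-t) * t ^ ((1 / 2 : ℝ) - 1) := by
  have hf : 0 ≤ schwarzschildProfile t := by
    apply Real.rpow_nonneg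
    have : Real.exp (t / 2) ≤ Real.exp t := Real.exp_le_exp.2 (by linarith)
    linarith [Real.exp_pos t]
  have h0 : 0 ≤ errorIntegrand c t := by
    unfold errorIntegrand
    positivity
  have hpow : t ^ ((1 / 2 : ℝ) - 1) = (Real.sqrt t)⁻¹ := by
    rw [Real.sqrt_eq_rpow, ← Real.rpow_neg ht.le]
    norm_num
  rw [Real.norm_of_nonneg h0, hpow]
  unfold errorIntegrand
  have hs : 0 < Real.sqrt t := Real.sqrt_pos.2 ht
  refine mul_le_mul (profile_pow_mul_exp_le ht) ?_ (by positivity) (by positivity)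
  exact inv_anti₀ hs
    ((sqrt_le_sqrt_exp_sub ht).trans (le_add_of_nonneg_right (Real.sqrt_nonneg _)))

lemma continuous_errorIntegrand {t : ℝ} (ht : 0 < t) :
    Continuous fun c => errorIntegrand c t := by
  unfold errorIntegrand
  refine continuous_const.mul (Continuous.inv₀ (by fun_prop) fun c => ?_)
  have h := (Real.sqrt_pos.2 ht).trans_le (sqrt_le_sqrt_exp_sub ht)
  positivity

lemma integrableOn_gamma_half :
    IntegrableOn (fun t : ℝ => Real.exp (-t) * t ^ ((1 / 2 : ℝ) - 1)) (Ioi 0) :=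
  Real.GammaIntegral_convergent (by norm_num)

/-- Since `√` vanishes on negative reals, the domination and the pointwise continuity
also hold for `c < 0`, so continuity holds on all of `ℝ`. -/
lemma continuous_errorIntegral : Continuous errorIntegral := by
  change Continuous fun c => ∫ t in Ioi (0 : ℝ), errorIntegrand c t
  refine continuous_of_dominated (fun c => (measurable_errorIntegrand c).aestronglyMeasurable)
    (fun c => ?_) integrableOn_gamma_half ?_
  · filter_upwards [ae_restrict_mem measurableSet_Ioi] with t ht
    exact norm_errorIntegrand_le c ht
  · filter_upwards [ae_restrict_mem measurableSet_Ioi] with t ht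
    exact continuous_errorIntegrand ht

/-- `F(c)` is finite for every `c ≥ 0`, `F` is continuous on `[0,∞)`, and in particular
`F(c) → F(0)` as `c → 0⁺`. -/
theorem errorIntegral_finite_continuous :
    (∀ c : ℝ, 0 ≤ c →
      IntegrableOn
        (fun t => schwarzschildProfile t ^ (6 : ℝ) * Real.exp (2 * t) *
          (Real.sqrt (16 * π * (Real.exp t - Real.exp (t / 2))) +
            Real.sqrt (16 * π * c * Real.exp t))⁻¹) (Ioi (0 : ℝ))) ∧
    ContinuousOn errorIntegral (Ici (0 : ℝ)) ∧
    Tendsto errorIntegral (nhdsWithin 0 (Ioi (0 : ℝ))) (nhds (errorIntegral 0)) := by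
  refine ⟨fun c _ => ?_, continuous_errorIntegral.continuousOn,
    (continuous_errorIntegral.tendsto 0).mono_left nhdsWithin_le_nhds⟩
  refine Integrable.mono' integrableOn_gamma_half
    (measurable_errorIntegrand c).aestronglyMeasurable ?_
  filter_upwards [ae_restrict_mem measurableSet_Ioi] with t ht
  exact norm_errorIntegrand_le c ht
end
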